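/- Let I_n^t, V_n^t be a solution of the hpdToda equation. For every t ∈ ℤ, every x ∈ ℂ, and every nonzero y ∈ ℂ such that R_t(y) is invertible, det(X_{t+1}(y) − x·E) = det(X_t(y) − x·E), where E is the N×N identity matrix. In particular the characteristic polynomial of X_t(y), and hence the spectral curve, is invariant under the time evolution t ↦ t+1. -/

import Mathlib

/-!
The hpdToda equation implies the Lax equation `L_{t+1} R_{t+M} = R_t L_t`
(`lax_equation`). Multiplying `X_{t+1}` by `R_t` on the right extends the product of the `R` by one
factor, and the Lax equation then gives `X_{t+1} R_t = R_t X_t`. As `R_t` is invertible, `X_{t+1}`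
and `X_t` are similar, so their characteristic polynomials agree.

For the Lax equation, let `S` be the twisted cyclic shift, and write `R_t = D(I^t) + S` and
`L_t = 1 + S⁻¹ D(V^t)` with `D(f) = diag(f(1), …, f(N))`. The only commutation rule needed is
`D(f) S⁻¹ = S⁻¹ D(f(· + 1))` for `N`-periodic `f`. It reduces the claim to the two hpdToda
equations on the diagonal and the subdiagonal, with no case distinction for `N = 1, 2`.
-/

open Matrix Finset Filter

/-- The matrix `L_t(y)`: `(n,n)`-entry `1`, `(n+1,n)`-entry `V_n^t` for `n = 1,…,N-1`,
`(1,N)`-entry `V_N^t / y` (indices written 1-based; here realized 0-based on `Fin N`). -/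
noncomputable def Ltoda (N : ℕ) (V : ℤ → ℤ → ℂ) (t : ℤ) (y : ℂ) :
    Matrix (Fin N) (Fin N) ℂ := fun i j =>
  (if i = j then 1 else 0) +
  (if (i : ℕ) = (j : ℕ) + 1 then V ((j : ℕ) + 1) t else 0) +
  (if (i : ℕ) = 0 ∧ (j : ℕ) = N - 1 then V N t / y else 0)

/-- The matrix `R_t(y)`: `(n,n)`-entry `I_n^t`, `(n,n+1)`-entry `1` for `n = 1,…,N-1`,
`(N,1)`-entry `y`. -/
noncomputable def Rtoda (N : ℕ) (I : ℤ → ℤ → ℂ) (t : ℤ) (y : ℂ) :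
    Matrix (Fin N) (Fin N) ℂ := fun i j =>
  (if i = j then I ((i : ℕ) + 1) t else 0) +
  (if (j : ℕ) = (i : ℕ) + 1 then 1 else 0) +
  (if (i : ℕ) = N - 1 ∧ (j : ℕ) = 0 then y else 0)

/-- The shift matrix `S(y)`: `(n,n+1)`-entry `1` for `n = 1,…,N-1`, `(N,1)`-entry `y`. -/
def Stoda (N : ℕ) (y : ℂ) : Matrix (Fin N) (Fin N) ℂ := fun i j =>
  (if (j : ℕ) = (i : ℕ) + 1 then 1 else 0) +
  (if (i : ℕ) = N - 1 ∧ (j : ℕ) = 0 then y else 0)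

/-- `Rprod N I t y k = R_{t+k-1}(y) ⋯ R_{t+1}(y) · R_t(y)`. -/
noncomputable def Rprod (N : ℕ) (I : ℤ → ℤ → ℂ) (t : ℤ) (y : ℂ) :
    ℕ → Matrix (Fin N) (Fin N) ℂ
  | 0 => 1
  | k + 1 => Rtoda N I (t + k) y * Rprod N I t y k

/-- `X_t(y) = L_t(y) · R_{t+M-1}(y) ⋯ R_{t+1}(y) · R_t(y)`. -/
noncomputable def Xtoda (N M : ℕ) (I V : ℤ → ℤ → ℂ) (t : ℤ) (y : ℂ) :
    Matrix (Fin N) (Fin N) ℂ :=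
  Ltoda N V t y * Rprod N I t y M

/-- `(I, V)` is a solution of the hungry periodic discrete Toda equation `Toda_{N,M}`. -/
def IsToda (N M : ℕ) (I V : ℤ → ℤ → ℂ) : Prop :=
  ∀ n t : ℤ,
    I n (t + M) = I n t + V n t - V (n - 1) (t + 1) ∧
    V n (t + 1) * I n (t + M) = I (n + 1) t * V n t ∧
    I (n + N) t = I n t ∧ V (n + N) t = V n t

/-- The cyclic successor `i ↦ i + 1 mod N` on `Fin N`. -/
def cycSucc {N : ℕ} (i : Fin N) : Fin N :=
  ⟨((i : ℕ) + 1) % N, Nat.mod_lt _ i.pos⟩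

lemma cycSucc_injective {N : ℕ} : Function.Injective (cycSucc (N := N)) := by
  intro i j h
  have h' : ((i : ℕ) + 1) % N = ((j : ℕ) + 1) % N := congrArg Fin.val h
  have : (i : ℕ) % N = (j : ℕ) % N := Nat.ModEq.add_right_cancel' 1 h'
  rwa [Nat.mod_eq_of_lt i.2, Nat.mod_eq_of_lt j.2, Fin.val_inj] at this

/-- The nonzero entry of row `i` of the twisted shift: `y` in the last row, `1` elsewhere. -/
noncomputable def shiftWeight {N : ℕ} (y : ℂ) (i : Fin N) : ℂ :=
  if (i : ℕ) = N - 1 then y else 1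

lemma shiftWeight_ne_zero {N : ℕ} {y : ℂ} (hy : y ≠ 0) (i : Fin N) : shiftWeight y i ≠ 0 := by
  unfold shiftWeight
  split_ifs
  · exact hy
  · exact one_ne_zero

/-- The twisted cyclic shift; it coincides with `Stoda N y`, in a form where each row has
visibly a single nonzero entry, uniformly in `N` (including `N = 1`). -/
noncomputable def shiftMat (N : ℕ) (y : ℂ) : Matrix (Fin N) (Fin N) ℂ := fun i j =>
  if j = cycSucc i then shiftWeight y i else 0

/-- The inverse of `shiftMat N y` (for `y ≠ 0`). -/
noncomputable def shiftInv (N : ℕ) (y : ℂ) : Matrix (Fin N) (Fin N) ℂ := fun i j =>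
  if i = cycSucc j then (shiftWeight y j)⁻¹ else 0

lemma shiftMat_mul_shiftInv {N : ℕ} {y : ℂ} (hy : y ≠ 0) :
    shiftMat N y * shiftInv N y = 1 := by
  ext i j
  simp only [Matrix.mul_apply, shiftMat, shiftInv, ite_mul, zero_mul, Finset.sum_ite_eq',
    Finset.mem_univ, if_true, Matrix.one_apply, cycSucc_injective.eq_iff]
  split_ifs with h
  · subst h
    exact mul_inv_cancel₀ (shiftWeight_ne_zero hy i)
  · simp

/-- The diagonal matrix `diag(f(1), …, f(N))`. -/
noncomputable def seqDiag (N : ℕ) (f : ℤ → ℂ) : Matrix (Fin N) (Fin N) ℂ :=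
  Matrix.diagonal fun i => f ((i : ℕ) + 1)

lemma val_cycSucc {N : ℕ} (i : Fin N) :
    ((cycSucc i : Fin N) : ℕ) = if (i : ℕ) = N - 1 then 0 else (i : ℕ) + 1 := by
  have hi := i.2
  split_ifs with h
  · have : (i : ℕ) + 1 = N := by omega
    simp [cycSucc, this]
  · exact Nat.mod_eq_of_lt (by omega)

/-- Moving an `N`-periodic diagonal past the inverse shift advances its index by one. -/
lemma seqDiag_mul_shiftInv {N : ℕ} (y : ℂ) {f : ℤ → ℂ} (hf : ∀ n, f (n + N) = f n) :
    seqDiag N f * shiftInv N y = shiftInv N y * seqDiag N (fun n => f (n + 1)) := by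
  ext i j
  simp only [seqDiag, Matrix.diagonal_mul, Matrix.mul_diagonal, shiftInv]
  split_ifs with h
  · have hval : f (((i : Fin N) : ℕ) + 1) = f ((j : ℕ) + 1 + 1) := by
      rw [h, val_cycSucc]
      split_ifs with hj
      · have hjN : ((j : ℕ) : ℤ) + 1 = N := by have := j.2; omega
        rw [hjN, ← hf]
        congr 1
        push_cast
        ring
      · push_cast
        rfl
    rw [hval, mul_comm]
  · simp

lemma Rtoda_eq {N : ℕ} (I : ℤ → ℤ → ℂ) (t : ℤ) (y : ℂ) :
    Rtoda N I t y = seqDiag N (fun n => I n t) + shiftMat N y := by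
  ext i j
  have hi := i.2
  have hj := j.2
  simp only [Rtoda, seqDiag, shiftMat, shiftWeight, Matrix.add_apply, Matrix.diagonal_apply,
    add_assoc, Fin.ext_iff, val_cycSucc]
  congr 1
  by_cases h : (i : ℕ) = N - 1
  · have : ¬ (j : ℕ) = (i : ℕ) + 1 := by omega
    simp [h]
    omega
  · simp [h]

lemma Ltoda_eq {N : ℕ} (V : ℤ → ℤ → ℂ) (t : ℤ) (y : ℂ) :
    Ltoda N V t y = 1 + shiftInv N y * seqDiag N (fun n => V n t) := by
  ext i j
  have hi := i.2
  have hj := j.2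
  simp only [Ltoda, seqDiag, shiftInv, shiftWeight, Matrix.add_apply, Matrix.mul_diagonal,
    Matrix.one_apply, add_assoc]
  congr 1
  simp only [Fin.ext_iff, val_cycSucc]
  by_cases h : (j : ℕ) = N - 1
  · have h1 : ¬ (i : ℕ) = (j : ℕ) + 1 := by omega
    have h2 : ((j : ℕ) : ℤ) + 1 = N := by omega
    rw [h2, if_neg h1]
    simp only [h, and_true, if_true, zero_add, ite_mul, zero_mul]
    rw [div_eq_inv_mul]
  · simp [h]

/-- The Lax form of the equation: `L_{t+1} R_{t+M} = R_t L_t`. -/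
lemma lax_equation {N M : ℕ} {I V : ℤ → ℤ → ℂ} (hsol : IsToda N M I V) (t : ℤ) {y : ℂ}
    (hy : y ≠ 0) :
    Ltoda N V (t + 1) y * Rtoda N I (t + M) y = Rtoda N I t y * Ltoda N V t y := by
  have hST := shiftMat_mul_shiftInv (N := N) hy
  have hTS : shiftInv N y * shiftMat N y = 1 := mul_eq_one_comm.mp hST
  have hI := seqDiag_mul_shiftInv (N := N) y (f := fun n => I n t) fun n => (hsol n t).2.2.1
  have hV := seqDiag_mul_shiftInv (N := N) y (f := fun n => V (n - 1) (t + 1)) fun n => by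
    have := (hsol (n - 1) (t + 1)).2.2.2
    rw [← this]
    congr 1
    ring
  simp only [add_sub_cancel_right] at hV
  -- Equation (i) is the diagonal part, equation (ii) the subdiagonal part.
  have h1 : seqDiag N (fun n => I n (t + M)) + seqDiag N (fun n => V (n - 1) (t + 1)) =
      seqDiag N (fun n => I n t) + seqDiag N (fun n => V n t) := by
    simp only [seqDiag, Matrix.diagonal_add]
    congr 1
    funext i
    rw [(hsol _ t).1]
    ring
  have h2 : seqDiag N (fun n => V n (t + 1)) * seqDiag N (fun n => I n (t + M)) =
      seqDiag N (fun n => I (n + 1) t) * seqDiag N (fun n => V n t) := by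
    simp only [seqDiag, Matrix.diagonal_mul_diagonal]
    congr 1
    funext i
    exact (hsol _ t).2.1
  rw [Ltoda_eq, Ltoda_eq, Rtoda_eq, Rtoda_eq]
  generalize shiftMat N y = S at *
  generalize shiftInv N y = T at *
  calc _ = (seqDiag N (fun n => I n (t + M)) + (T * seqDiag N (fun n => V n (t + 1))) * S) + S +
        T * (seqDiag N (fun n => V n (t + 1)) * seqDiag N (fun n => I n (t + M))) := by
        noncomm_ring
    _ = (seqDiag N (fun n => I n t) + seqDiag N (fun n => V n t)) + S +
        (T * seqDiag N (fun n => I (n + 1) t)) * seqDiag N (fun n => V n t) := by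
        rw [h2, ← hV, mul_assoc _ T S, hTS, mul_one, h1, mul_assoc T]
    _ = seqDiag N (fun n => I n t) + (S * T) * seqDiag N (fun n => V n t) + S +
        seqDiag N (fun n => I n t) * T * seqDiag N (fun n => V n t) := by
        rw [← hI, hST, one_mul]
    _ = _ := by noncomm_ring

/-- The product `R_{t+k} ⋯ R_t` with its rightmost factor split off. -/
lemma Rprod_succ_right (N : ℕ) (I : ℤ → ℤ → ℂ) (t : ℤ) (y : ℂ) (k : ℕ) :
    Rprod N I (t + 1) y k * Rtoda N I t y = Rprod N I t y (k + 1) := by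
  induction k with
  | zero => simp [Rprod]
  | succ k ih =>
    rw [Rprod, mul_assoc, ih, Rprod.eq_2 N I t y (k + 1)]
    congr 2
    push_cast
    ring

/-- for a solution of hpdToda, the characteristic polynomial of `X_t(y)`
is invariant under the time evolution `t ↦ t+1`, whenever `R_t(y)` is invertible. -/
theorem stmt3 (N M : ℕ) (hN : 0 < N) (hM : 0 < M) (I V : ℤ → ℤ → ℂ)
    (hsol : IsToda N M I V) :
    ∀ (t : ℤ) (x : ℂ) (y : ℂ), y ≠ 0 → IsUnit (Rtoda N I t y) →
      (Xtoda N M I V (t + 1) y - x • (1 : Matrix (Fin N) (Fin N) ℂ)).det =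
      (Xtoda N M I V t y - x • (1 : Matrix (Fin N) (Fin N) ℂ)).det := by
  intro t x y hy hR
  have hX : Xtoda N M I V (t + 1) y * Rtoda N I t y = Rtoda N I t y * Xtoda N M I V t y := by
    rw [Xtoda, Xtoda, mul_assoc, Rprod_succ_right, Rprod, ← mul_assoc, ← mul_assoc,
      lax_equation hsol t hy]
  have hdet : (Rtoda N I t y).det ≠ 0 := ((Matrix.isUnit_iff_isUnit_det _).mp hR).ne_zero
  apply mul_right_cancel₀ hdet
  rw [← Matrix.det_mul, sub_mul, hX, mul_comm (Matrix.det _), ← Matrix.det_mul, mul_sub]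
  simp
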